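/- A d-dimensional (0,1)-matrix A of order 2 is extremal if and only if the Boolean function f on d variables whose value table is A is both selfdual and threshold. -/

import Mathlib

open Finset

/-- The sum of the entries of `k` over the hyperplane `Γ_{i,j}`. -/
def hypSum {d n : ℕ} (k : (Fin d → Fin n) → ℝ) (i : Fin d) (j : Fin n) : ℝ :=
  ∑ α ∈ Finset.univ.filter (fun α : Fin d → Fin n => α i = j), k α

/-- `k` is a polyplex of weight `W` in the `d`-dimensional (0,1)-matrix `A` of order `n`. -/
def IsPolyplex {d n : ℕ} (A : (Fin d → Fin n) → Bool) (k : (Fin d → Fin n) → ℝ) (W : ℝ) : Prop :=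
  (∀ α, 0 ≤ k α) ∧ (∀ α, A α = false → k α = 0) ∧
  (∀ i j, hypSum k i j ≤ 1) ∧ (∑ α, k α) = W

/-- `k` is a polydiagonal in `A`: a nonnegative weighting of the support whose sum over
every hyperplane equals `1`. -/
def IsPolydiagonal {d n : ℕ} (A : (Fin d → Fin n) → Bool) (k : (Fin d → Fin n) → ℝ) : Prop :=
  (∀ α, 0 ≤ k α) ∧ (∀ α, A α = false → k α = 0) ∧ (∀ i j, hypSum k i j = 1)

def HasPolydiagonal {d n : ℕ} (A : (Fin d → Fin n) → Bool) : Prop :=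
  ∃ k, IsPolydiagonal A k

/-- The matrix obtained from `A` by additionally setting the entry at `β` to `1`. -/
def addEntry {d n : ℕ} (A : (Fin d → Fin n) → Bool) (β : Fin d → Fin n) :
    (Fin d → Fin n) → Bool :=
  fun α => if α = β then true else A α

/-- `A` is extremal: it has no polydiagonal, and adding any entry creates one. -/
def IsExtremal {d n : ℕ} (A : (Fin d → Fin n) → Bool) : Prop :=
  ¬ HasPolydiagonal A ∧ ∀ β, A β = false → HasPolydiagonal (addEntry A β)

/-- `Λ` is a hyperplane cover of `A`. -/
def IsCover {d n : ℕ} (A : (Fin d → Fin n) → Bool) (Λ : Fin d → Fin n → ℝ) : Prop :=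
  (∀ i j, 0 ≤ Λ i j) ∧ ∀ α, A α = true → 1 ≤ ∑ i, Λ i (α i)

/-- The weight of a hyperplane cover. -/
def coverWeight {d n : ℕ} (Λ : Fin d → Fin n → ℝ) : ℝ := ∑ i, ∑ j, Λ i j

/-- `Λ` is an optimal hyperplane cover of `A`: a cover of minimum weight. -/
def IsOptimalCover {d n : ℕ} (A : (Fin d → Fin n) → Bool) (Λ : Fin d → Fin n → ℝ) : Prop :=
  IsCover A Λ ∧ ∀ Λ', IsCover A Λ' → coverWeight Λ ≤ coverWeight Λ'

/-- `A` is a threshold matrix. -/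
def IsThreshold {d n : ℕ} (A : (Fin d → Fin n) → Bool) : Prop :=
  ∃ Λ : Fin d → Fin n → ℝ, (∀ i j, 0 ≤ Λ i j) ∧
    ∀ α, (A α = true ↔ 1 ≤ ∑ i, Λ i (α i))

/-- `A` and `B` are equivalent: `B` is obtained from `A` by permuting directions and
permuting parallel hyperplanes, i.e. `B(α) = A(β)` where `β (π i) = σ i (α i)`. -/
def MatEquiv {d n : ℕ} (A B : (Fin d → Fin n) → Bool) : Prop :=
  ∃ (π : Equiv.Perm (Fin d)) (σ : Fin d → Equiv.Perm (Fin n)),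
    ∀ α, B α = A (fun j => σ (π.symm j) (α (π.symm j)))

/-- The rate of the hyperplane `Γ_{i,j}` of `A`: the number of ones it contains. -/
def rate {d n : ℕ} (A : (Fin d → Fin n) → Bool) (i : Fin d) (j : Fin n) : ℕ :=
  (Finset.univ.filter (fun α : Fin d → Fin n => A α = true ∧ α i = j)).card

/-- The profile of `A`: the multiset of the rates of all its `d·n` hyperplanes. -/
def profile {d n : ℕ} (A : (Fin d → Fin n) → Bool) : Multiset ℕ :=
  (Finset.univ : Finset (Fin d × Fin n)).val.map (fun p => rate A p.1 p.2)


/-- A Boolean function (matrix of order 2) is selfdual if complementing the input complements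
the output. -/
def SelfDual {d : ℕ} (A : (Fin d → Fin 2) → Bool) : Prop :=
  ∀ α : Fin d → Fin 2, A (fun i => if α i = 0 then 1 else 0) = ! A α

/-- A is a threshold Boolean function: there are weights μ and a threshold T with
A x = 1 iff the weighted sum of the variables is at least T. -/
def IsThresholdBF {d : ℕ} (A : (Fin d → Fin 2) → Bool) : Prop :=
  ∃ (μ : Fin d → ℝ) (T : ℝ), ∀ α, (A α = true ↔ T ≤ ∑ i, μ i * ((α i : ℕ) : ℝ))


/-- the sign vector of an index -/
def sgnv {d : ℕ} (α : Fin d → Fin 2) : Fin d → ℝ := fun i => if α i = 1 then 1 else -1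

lemma hyp_add {d : ℕ} (k : (Fin d → Fin 2) → ℝ) (i : Fin d) :
    hypSum k i 1 + hypSum k i 0 = ∑ α, k α := by
  unfold hypSum
  rw [Finset.sum_filter, Finset.sum_filter, ← Finset.sum_add_distrib]
  refine Finset.sum_congr rfl fun α _ => ?_
  rcases (by omega : α i = 0 ∨ α i = 1) with h | h <;> simp [h]

lemma hyp_sub {d : ℕ} (k : (Fin d → Fin 2) → ℝ) (i : Fin d) :
    hypSum k i 1 - hypSum k i 0 = ∑ α, k α * sgnv α i := by
  unfold hypSum sgnv
  rw [Finset.sum_filter, Finset.sum_filter, ← Finset.sum_sub_distrib]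
  refine Finset.sum_congr rfl fun α _ => ?_
  rcases (by omega : α i = 0 ∨ α i = 1) with h | h <;> simp [h]

lemma sgnv_inj {d : ℕ} : Function.Injective (sgnv (d := d)) := by
  intro α β h
  funext i
  have := congrFun h i
  unfold sgnv at this
  rcases (by omega : α i = 0 ∨ α i = 1) with h1 | h1 <;>
  rcases (by omega : β i = 0 ∨ β i = 1) with h2 | h2 <;> simp [h1, h2] at this ⊢ <;> norm_num at this

/-- A polydiagonal is orthogonal to every linear functional. -/
lemma poly_orth {d : ℕ} {k : (Fin d → Fin 2) → ℝ} (h : ∀ i j, hypSum k i j = 1) (w : Fin d → ℝ) :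
    ∑ α, k α * ∑ i, w i * sgnv α i = 0 := by
  have : ∑ α, k α * ∑ i, w i * sgnv α i = ∑ i, w i * (hypSum k i 1 - hypSum k i 0) := by
    simp_rw [hyp_sub, Finset.mul_sum]
    rw [Finset.sum_comm]
    refine Finset.sum_congr rfl fun i _ => Finset.sum_congr rfl fun α _ => by ring
  rw [this]
  simp [h]

lemma exists_sep {d : ℕ} (A : (Fin d → Fin 2) → Bool) (h : ¬ HasPolydiagonal A) :
    ∃ w : Fin d → ℝ, ∀ α, A α = true → 0 < ∑ i, w i * sgnv α i := by
  classical
  set S : Finset (Fin d → ℝ) := (univ.filter fun α => A α = true).image sgnv with hS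
  have h0 : (0 : Fin d → ℝ) ∉ convexHull ℝ (S : Set (Fin d → ℝ)) := by
    intro hm
    rw [Finset.mem_convexHull'] at hm
    obtain ⟨w, hw0, hw1, hw2⟩ := hm
    rw [hS, Finset.sum_image sgnv_inj.injOn, Finset.sum_filter] at hw1 hw2
    refine h ⟨fun α => if A α = true then 2 * w (sgnv α) else 0, ?_, ?_, ?_⟩
    · intro α
      dsimp only
      split_ifs with hα
      · have := hw0 (sgnv α) (by rw [hS]; exact mem_image_of_mem _ (by simp [hα]))
        linarith
      · exact le_rfl
    · intro α hα; simp [hα]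
    · intro i j
      set k : (Fin d → Fin 2) → ℝ := fun α => if A α = true then 2 * w (sgnv α) else 0 with hk
      have e1 : ∑ α, k α = 2 := by
        have : ∑ α, k α = 2 * ∑ α, if A α = true then w (sgnv α) else 0 := by
          rw [Finset.mul_sum]
          refine Finset.sum_congr rfl fun α _ => ?_
          simp only [hk]; split_ifs <;> simp
        rw [this, hw1]; norm_num
      have e2 : ∑ α, k α * sgnv α i = 0 := by
        have h3 := congrFun hw2 i
        rw [Finset.sum_apply] at h3
        have : ∑ α, k α * sgnv α i =
            2 * ∑ α, (if A α = true then w (sgnv α) • sgnv α else 0) i := by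
          rw [Finset.mul_sum]
          refine Finset.sum_congr rfl fun α _ => ?_
          simp only [hk]; split_ifs <;> simp [mul_assoc]
        rw [this, h3]; simp
      have a1 := hyp_add k i
      have a2 := hyp_sub k i
      rcases (by omega : j = 0 ∨ j = 1) with rfl | rfl <;> linarith
  obtain ⟨f, u, hu, hb⟩ := geometric_hahn_banach_point_closed (convex_convexHull ℝ _)
    (S.finite_toSet.isClosed_convexHull ℝ) h0
  refine ⟨fun i => f (Pi.single i 1), fun α hα => ?_⟩
  have h1 := hb (sgnv α) (subset_convexHull ℝ _ (by
    rw [Finset.mem_coe, hS]; exact mem_image_of_mem _ (by simp [hα])))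
  have h2 : f (sgnv α) = ∑ i, f (Pi.single i 1) * sgnv α i := by
    conv_lhs => rw [pi_eq_sum_univ' (sgnv α)]
    rw [map_sum]
    refine Finset.sum_congr rfl fun i _ => ?_
    rw [map_smul, smul_eq_mul, mul_comm]
  rw [map_zero] at hu
  linarith

lemma sgnv_compl {d : ℕ} (α : Fin d → Fin 2) (i : Fin d) :
    sgnv (fun i => if α i = 0 then 1 else 0) i = - sgnv α i := by
  unfold sgnv
  rcases (by omega : α i = 0 ∨ α i = 1) with h1 | h1 <;> simp [h1]

lemma sum_compl {d : ℕ} (w : Fin d → ℝ) (α : Fin d → Fin 2) :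
    ∑ i, w i * sgnv (fun i => if α i = 0 then 1 else 0) i = - ∑ i, w i * sgnv α i := by
  simp_rw [sgnv_compl]
  simp

lemma sgnv_val {d : ℕ} (α : Fin d → Fin 2) (i : Fin d) :
    sgnv α i = 2 * ((α i : ℕ) : ℝ) - 1 := by
  unfold sgnv
  rcases (by omega : α i = 0 ∨ α i = 1) with h1 | h1 <;> simp [h1] <;> norm_num

/-- Strict positivity on the support excludes a polydiagonal, when `0 < d`. -/
lemma no_poly {d : ℕ} (hd : 0 < d) (A : (Fin d → Fin 2) → Bool) (β : Fin d → Fin 2)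
    (w : Fin d → ℝ) (h : ∀ α, A α = true → 0 < ∑ i, w i * sgnv α i)
    (hβ : 0 ≤ ∑ i, w i * sgnv β i) : ¬ HasPolydiagonal (addEntry A β) := by
  rintro ⟨k, hk0, hks, hkh⟩
  have h1 := poly_orth hkh w
  have h2 : ∀ α, 0 ≤ k α * ∑ i, w i * sgnv α i := by
    intro α
    by_cases e : α = β
    · subst e; exact mul_nonneg (hk0 _) hβ
    · cases hA : A α
      · rw [hks α (by simp [addEntry, e, hA])]; simp
      · exact mul_nonneg (hk0 _) (h α hA).le
  have h3 := (Finset.sum_eq_zero_iff_of_nonneg (fun α _ => h2 α)).1 h1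
  have h4 : ∀ α, α ≠ β → k α = 0 := by
    intro α e
    cases hA : A α
    · exact hks α (by simp [addEntry, e, hA])
    · rcases mul_eq_zero.1 (h3 α (mem_univ _)) with h5 | h5
      · exact h5
      · exact absurd h5 (h α hA).ne'
  have h6 := hkh ⟨0, hd⟩ (if β ⟨0, hd⟩ = 0 then 1 else 0)
  unfold hypSum at h6
  rw [Finset.sum_eq_zero] at h6
  · norm_num at h6
  · intro α hα
    apply h4
    rintro rfl
    simp only [mem_filter, mem_univ, true_and] at hα
    split_ifs at hα <;> simp_all

/-- Extremal matrices of order 2 are exactly selfdual threshold Boolean functions. -/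
theorem stmt_5 {d : ℕ} (A : (Fin d → Fin 2) → Bool) :
    IsExtremal A ↔ (SelfDual A ∧ IsThresholdBF A) := by
  rcases Nat.eq_zero_or_pos d with rfl | hd
  · constructor
    · rintro ⟨h, -⟩
      exact absurd ⟨0, by simp, by simp, fun i => i.elim0⟩ h
    · rintro ⟨h, -⟩
      have h1 := h (fun i => i.elim0)
      rw [Subsingleton.elim (fun i : Fin 0 => if (i.elim0 : Fin 2) = 0 then (1 : Fin 2) else 0)
        (fun i => i.elim0)] at h1
      simp at h1
  constructor
  · rintro ⟨hn, he⟩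
    obtain ⟨w, hw⟩ := exists_sep A hn
    have hneg : ∀ α, A α = false → ∑ i, w i * sgnv α i < 0 := by
      intro β hβ
      by_contra hc
      exact no_poly hd A β w hw (not_lt.1 hc) (he β hβ)
    refine ⟨fun α => ?_, fun i => 2 * w i, ∑ i, w i, fun α => ?_⟩
    · have hc := sum_compl w α
      cases h1 : A α <;> cases h2 : A (fun i => if α i = 0 then 1 else 0)
      · linarith [hneg _ h1, hneg _ h2]
      · rfl
      · rfl
      · linarith [hw _ h1, hw _ h2]
    · have e : ∑ i, w i * sgnv α i = ∑ i, 2 * w i * ((α i : ℕ) : ℝ) - ∑ i, w i := by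
        rw [← Finset.sum_sub_distrib]
        refine Finset.sum_congr rfl fun i _ => ?_
        rw [sgnv_val]; ring
      cases h1 : A α
      · have := hneg _ h1
        simp only [Bool.false_eq_true, false_iff, not_le]
        linarith
      · have := hw _ h1
        simp only [true_iff]
        linarith
  · rintro ⟨hs, μ, T, hT⟩
    have hw : ∀ α, A α = true → 0 < ∑ i, μ i * sgnv α i := by
      intro α hα
      have h1 := (hT α).1 hα
      have h2 := hs α
      rw [hα] at h2
      have h3 := mt (hT _).2 (by simpa using h2 : ¬ A (fun i => if α i = 0 then 1 else 0) = true)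
      have e : ∑ i, μ i * sgnv α i = ∑ i, μ i * ((α i : ℕ) : ℝ) -
          ∑ i, μ i * (((if α i = 0 then 1 else 0 : Fin 2) : ℕ) : ℝ) := by
        rw [← Finset.sum_sub_distrib]
        refine Finset.sum_congr rfl fun i _ => ?_
        unfold sgnv
        rcases (by omega : α i = 0 ∨ α i = 1) with h1 | h1 <;> simp [h1]
      rw [e]
      linarith [not_le.1 h3]
    refine ⟨fun hp => ?_, fun β hβ => ?_⟩
    · -- some index is in the support
      have hex : ∃ β, A β = true := by
        cases h1 : A 0
        · exact ⟨_, by rw [hs 0, h1]; rfl⟩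
        · exact ⟨_, h1⟩
      obtain ⟨β, hβ⟩ := hex
      refine no_poly hd A β μ hw (hw β hβ).le ?_
      have : addEntry A β = A := by
        funext α
        unfold addEntry
        split_ifs with h
        · rw [h, hβ]
        · rfl
      rwa [this]
    · set γ : Fin d → Fin 2 := fun i => if β i = 0 then 1 else 0 with hγ
      have hA : A γ = true := by rw [hs β, hβ]; rfl
      refine ⟨fun α => (if α = β then 1 else 0) + (if α = γ then 1 else 0), ?_, ?_, ?_⟩
      · intro α; dsimp only; split_ifs <;> norm_num
      · intro α hα
        unfold addEntry at hα
        have h1 : α ≠ β := by rintro rfl; simp at hα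
        have h2 : α ≠ γ := by rintro rfl; simp [hA] at hα
        simp [h1, h2]
      · intro i j
        unfold hypSum
        rw [Finset.sum_add_distrib, Finset.sum_ite_eq', Finset.sum_ite_eq']
        simp only [mem_filter, mem_univ, true_and, hγ]
        rcases (by omega : β i = 0 ∨ β i = 1) with h1 | h1 <;>
        rcases (by omega : j = 0 ∨ j = 1) with rfl | rfl <;> simp [h1]
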